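/- If L1 ⊑fdr L2 holds (i.e., failures_⊥(L2) ⊆ failures_⊥(L1) and divergences(L2) ⊆ divergences(L1)), then no FD-witness is reachable in the product norm_fdr(L1) ⋉ L2, where a product state (U, s) is an FD-witness iff no state of U diverges and at least one of the following holds: U = ∅; s is stable and refusals(s) ⊄ refusals(U); or s diverges. -/

import Mathlib

/-- A labelled transition system with states `S` and visible actions `Act`.
Transition labels are `Option Act`, where `none` plays the role of the
internal action τ and `some a` is the visible action `a ∈ Act`. -/
structure LTS (S : Type*) (Act : Type*) where
  init : S
  tr : S → Option Act → S → Prop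

namespace LTS

variable {S S₁ S₂ : Type*} {Act : Type*}

/-- The trace relation: `s ⟶ε t` iff `s = t`, and `s ⟶(σ a) t` iff
`s ⟶σ u` and `u —a→ t` for some `u`. -/
inductive Trace (L : LTS S Act) : S → List (Option Act) → S → Prop
  | nil (s : S) : Trace L s [] s
  | snoc {s u t : S} {σ : List (Option Act)} {a : Option Act} :
      Trace L s σ u → L.tr u a t → Trace L s (σ ++ [a]) t

/-- The weak transition relation `s ⇒ρ t` for `ρ ∈ Act*`. -/
inductive Weak (L : LTS S Act) : S → List Act → S → Prop
  | refl (s : S) : Weak L s [] s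
  | tau {s t : S} : L.tr s none t → Weak L s [] t
  | act {s t : S} {a : Act} : L.tr s (some a) t → Weak L s [a] t
  | comp {s u t : S} {ρ σ : List Act} :
      Weak L s ρ u → Weak L u σ t → Weak L s (ρ ++ σ) t

/-- A state is reachable iff some trace leads from the initial state to it. -/
def Reachable (L : LTS S Act) (s : S) : Prop := ∃ σ, L.Trace L.init σ s

/-- A state is stable iff it has no outgoing τ-transition. -/
def Stable (L : LTS S Act) (s : S) : Prop := ¬ ∃ t, L.tr s none t

/-- A state diverges iff there is an infinite sequence of τ-transitions from it. -/
def Diverges (L : LTS S Act) (s : S) : Prop :=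
  ∃ f : ℕ → S, f 0 = s ∧ ∀ n, L.tr (f n) none (f (n + 1))

/-- The weak traces of an LTS. -/
def weaktraces (L : LTS S Act) : Set (List Act) := {ρ | ∃ t, L.Weak L.init ρ t}

/-- The divergences of an LTS: all `ρ σ` such that `ι ⇒ρ t` for a diverging `t`. -/
def divergences (L : LTS S Act) : Set (List Act) :=
  {w | ∃ ρ σ : List Act, w = ρ ++ σ ∧ ∃ t, L.Weak L.init ρ t ∧ L.Diverges t}

/-- The refusals of a (stable) state: all sets `X` of visible actions none of
which is enabled in `s`. -/
def refusals (L : LTS S Act) (s : S) : Set (Set Act) :=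
  {X | ∀ a ∈ X, ¬ ∃ t, L.tr s (some a) t}

/-- The refusals of a set of states. -/
def refusalsSet (L : LTS S Act) (U : Set S) : Set (Set Act) :=
  {X | ∃ s ∈ U, L.Stable s ∧ X ∈ L.refusals s}

/-- The stable failures of an LTS. -/
def failures (L : LTS S Act) : Set (List Act × Set Act) :=
  {p | ∃ t, L.Weak L.init p.1 t ∧ L.Stable t ∧ p.2 ∈ L.refusals t}

/-- The failures with post-divergence details obscured. -/
def failuresBot (L : LTS S Act) : Set (List Act × Set Act) :=
  L.failures ∪ {p | p.1 ∈ L.divergences}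

/-- The normal form of an LTS. -/
def norm (L : LTS S Act) : LTS (Set S) Act where
  init := {s | L.Weak L.init [] s}
  tr U a V := ∃ b : Act, a = some b ∧ V = {t | ∃ s ∈ U, L.Weak s [b] t}

/-- The failures-divergences normal form of an LTS. -/
def normFdr (L : LTS S Act) : LTS (Set S) Act where
  init := {s | L.Weak L.init [] s}
  tr U a V := ∃ b : Act, a = some b ∧ (¬ ∃ s ∈ U, L.Diverges s) ∧
      V = {t | ∃ s ∈ U, L.Weak s [b] t}

/-- The product of two LTSs. -/
def prod (L₁ : LTS S₁ Act) (L₂ : LTS S₂ Act) : LTS (S₁ × S₂) Act where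
  init := (L₁.init, L₂.init)
  tr p a q :=
    (a = none ∧ q.1 = p.1 ∧ L₂.tr p.2 none q.2) ∨
    (∃ b : Act, a = some b ∧ L₁.tr p.1 (some b) q.1 ∧ L₂.tr p.2 (some b) q.2)

end LTS


/-- An FD-witness: no state of `U` diverges, and `U = ∅`, or `s` is stable and
some refusal of `s` is not a refusal of `U`, or `s` diverges. -/
def FDwitness {S₁ S₂ Act : Type*} (L₁ : LTS S₁ Act) (L₂ : LTS S₂ Act)
    (p : Set S₁ × S₂) : Prop :=
  (¬ ∃ u ∈ p.1, L₁.Diverges u) ∧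
    (p.1 = ∅ ∨ (L₂.Stable p.2 ∧ ¬ L₂.refusals p.2 ⊆ L₁.refusalsSet p.1) ∨
      L₂.Diverges p.2)

/-!
A state `(U, s)` of the product reached along the weak trace `ρ` has `s` among the states of `L₂`
after `ρ`, and `U` equal to the set of states of `L₁` after `ρ`. Since the normal form stops at
sets containing a diverging state, if no state of `U` diverges then `ρ` is not a divergence of `L₁`
at all. For such `ρ` the two inclusions say that `L₂` does not diverge after `ρ` and that its
refusals after `ρ` are refusals of `U`. This rules out the last two kinds of witness; it also rules
out `U = ∅`, because a state that does not diverge reaches a stable state by τ-steps, and that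
state refuses `∅`.
-/

namespace LTS

section Weak

variable {S Act : Type*} {L : LTS S Act}

theorem Weak.exists_of_append {s t : S} {ρ σ : List Act} (h : L.Weak s (ρ ++ σ) t) :
    ∃ u, L.Weak s ρ u ∧ L.Weak u σ t := by
  generalize hw : ρ ++ σ = w at h
  induction h generalizing ρ σ with
  | refl s =>
    obtain ⟨rfl, rfl⟩ := List.append_eq_nil_iff.1 hw
    exact ⟨s, .refl s, .refl s⟩
  | @tau s t hst =>
    obtain ⟨rfl, rfl⟩ := List.append_eq_nil_iff.1 hw
    exact ⟨t, .tau hst, .refl t⟩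
  | @act s t a hst =>
    obtain ⟨rfl, rfl⟩ | ⟨rfl, rfl⟩ := List.append_eq_singleton_iff.1 hw
    · exact ⟨s, .refl s, .act hst⟩
    · exact ⟨t, .act hst, .refl t⟩
  | comp hsu hut ihsu ihut =>
    obtain ⟨τ, rfl, rfl⟩ | ⟨τ, rfl, rfl⟩ := List.append_eq_append_iff.1 hw
    · obtain ⟨v, hsv, hvu⟩ := ihsu rfl
      exact ⟨v, hsv, .comp hvu hut⟩
    · obtain ⟨v, huv, hvt⟩ := ihut rfl
      exact ⟨v, .comp hsu huv, hvt⟩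

theorem weak_append_iff {s t : S} {ρ σ : List Act} :
    L.Weak s (ρ ++ σ) t ↔ ∃ u, L.Weak s ρ u ∧ L.Weak u σ t :=
  ⟨Weak.exists_of_append, fun ⟨_, hsu, hut⟩ => .comp hsu hut⟩

theorem Weak.trans_nil {s t u : S} {ρ : List Act} (hst : L.Weak s ρ t) (htu : L.Weak t [] u) :
    L.Weak s ρ u := by
  simpa only [List.append_nil] using hst.comp htu

theorem Trace.weak_reduceOption {s t : S} {σ : List (Option Act)} (h : L.Trace s σ t) :
    L.Weak s σ.reduceOption t := by
  induction h with
  | nil => exact .refl s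
  | @snoc u t σ a _ hut ih =>
    rw [List.reduceOption_append]
    cases a with
    | none => exact ih.comp (.tau hut)
    | some a => exact ih.comp (.act hut)

end Weak

section Divergence

variable {S Act : Type*} {L : LTS S Act}

theorem not_diverges_iff_acc {s : S} :
    ¬ L.Diverges s ↔ Acc (fun t s => L.tr s none t) s := by
  rw [not_iff_comm, not_acc_iff_exists_descending_chain]
  rfl

theorem exists_weak_stable_of_not_diverges {s : S} (h : ¬ L.Diverges s) :
    ∃ t, L.Weak s [] t ∧ L.Stable t := by
  rw [not_diverges_iff_acc] at h
  induction h with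
  | intro s _ ih =>
    by_cases hs : L.Stable s
    · exact ⟨s, .refl s, hs⟩
    · obtain ⟨u, hsu⟩ := not_not.1 hs
      obtain ⟨t, hut, ht⟩ := ih u hsu
      exact ⟨t, (Weak.tau hsu).comp hut, ht⟩

end Divergence

section After

variable {S S₁ S₂ Act : Type*}

/-- The set of states reached from the initial state by the weak trace `ρ`, written `ι ⇒ρ` in
process-algebraic notation. -/
def after (L : LTS S Act) (ρ : List Act) : Set S := {t | L.Weak L.init ρ t}

variable {L : LTS S Act} {L₁ : LTS S₁ Act} {L₂ : LTS S₂ Act}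

theorem after_append (ρ σ : List Act) :
    L.after (ρ ++ σ) = {t | ∃ s ∈ L.after ρ, L.Weak s σ t} :=
  Set.ext fun _ => weak_append_iff

theorem mem_divergences_iff {ρ : List Act} :
    ρ ∈ L.divergences ↔ ∃ σ, σ <+: ρ ∧ ∃ t ∈ L.after σ, L.Diverges t := by
  constructor
  · rintro ⟨σ, τ, rfl, ht⟩
    exact ⟨σ, List.prefix_append σ τ, ht⟩
  · rintro ⟨σ, ⟨τ, rfl⟩, ht⟩
    exact ⟨σ, τ, rfl, ht⟩

theorem nil_mem_divergences_iff :
    [] ∈ L.divergences ↔ ∃ t ∈ L.after [], L.Diverges t := by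
  simp only [mem_divergences_iff, List.prefix_nil, exists_eq_left]

theorem concat_mem_divergences_iff {ρ : List Act} {a : Act} :
    ρ ++ [a] ∈ L.divergences ↔
      (∃ t ∈ L.after (ρ ++ [a]), L.Diverges t) ∨ ρ ∈ L.divergences := by
  simp only [mem_divergences_iff, List.prefix_concat_iff, or_and_right, exists_or,
    exists_eq_left]

theorem mem_divergences_of_diverges {ρ : List Act} {t : S} (ht : t ∈ L.after ρ)
    (hdiv : L.Diverges t) : ρ ∈ L.divergences :=
  mem_divergences_iff.2 ⟨ρ, List.prefix_rfl, t, ht, hdiv⟩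

theorem refusalsSet_after_nonempty {ρ : List Act} {s : S} (hs : s ∈ L.after ρ)
    (hdiv : ¬ L.Diverges s) : (L.refusalsSet (L.after ρ)).Nonempty := by
  obtain ⟨t, hst, ht⟩ := exists_weak_stable_of_not_diverges hdiv
  exact ⟨∅, t, Weak.trans_nil hs hst, ht, fun a ha => absurd ha (Set.notMem_empty a)⟩

theorem mk_mem_failures_iff {ρ : List Act} {X : Set Act} :
    (ρ, X) ∈ L.failures ↔ X ∈ L.refusalsSet (L.after ρ) :=
  Iff.rfl

theorem refusalsSet_after_subset_of_failuresBot_subset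
    (hfail : L₂.failuresBot ⊆ L₁.failuresBot) {ρ : List Act} (hρ : ρ ∉ L₁.divergences) :
    L₂.refusalsSet (L₂.after ρ) ⊆ L₁.refusalsSet (L₁.after ρ) := by
  intro X hX
  have hmem : (ρ, X) ∈ L₁.failuresBot := hfail (Or.inl (mk_mem_failures_iff.2 hX))
  exact mk_mem_failures_iff.1 (hmem.resolve_right hρ)

end After

section NormalForm

variable {S Act : Type*} {L : LTS S Act} {σ : List (Option Act)} {U : Set S}

theorem Trace.eq_after_of_normFdr (h : L.normFdr.Trace L.normFdr.init σ U) :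
    U = L.after σ.reduceOption := by
  induction h with
  | nil => rfl
  | snoc _ htr ih =>
    obtain ⟨a, rfl, -, rfl⟩ := htr
    rw [ih, List.reduceOption_append, after_append]
    rfl

theorem Trace.exists_diverges_of_normFdr (h : L.normFdr.Trace L.normFdr.init σ U)
    (hσ : σ.reduceOption ∈ L.divergences) : ∃ u ∈ U, L.Diverges u := by
  rw [h.eq_after_of_normFdr]
  induction h with
  | nil => exact nil_mem_divergences_iff.1 hσ
  | @snoc V W σ _ hV htr ih =>
    obtain ⟨a, rfl, hconv, -⟩ := htr
    rw [List.reduceOption_append, List.reduceOption_singleton, Option.toList_some] at hσ ⊢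
    refine (concat_mem_divergences_iff.1 hσ).resolve_right fun hdiv => hconv ?_
    rw [hV.eq_after_of_normFdr]
    exact ih hdiv

end NormalForm

section Product

variable {S₁ S₂ Act : Type*} {L₁ : LTS S₁ Act} {L₂ : LTS S₂ Act} {p q : S₁ × S₂}
  {σ : List (Option Act)}

theorem Trace.fst_of_prod (h : (L₁.prod L₂).Trace p σ q) :
    L₁.Trace p.1 (σ.reduceOption.map some) q.1 := by
  induction h with
  | nil => exact .nil p.1
  | snoc _ htr ih =>
    obtain ⟨rfl, hfst, -⟩ | ⟨a, rfl, hfst, -⟩ := htr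
    · simpa [List.reduceOption_append, hfst] using ih
    · simpa [List.reduceOption_append] using ih.snoc hfst

theorem Trace.snd_of_prod (h : (L₁.prod L₂).Trace p σ q) : L₂.Trace p.2 σ q.2 := by
  induction h with
  | nil => exact .nil p.2
  | snoc _ htr ih =>
    obtain ⟨rfl, -, hsnd⟩ | ⟨a, rfl, -, hsnd⟩ := htr <;> exact ih.snoc hsnd

theorem Reachable.exists_after_of_normFdr_prod {U : Set S₁} {s : S₂}
    (h : (L₁.normFdr.prod L₂).Reachable (U, s)) :
    ∃ ρ, U = L₁.after ρ ∧ s ∈ L₂.after ρ ∧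
      (ρ ∈ L₁.divergences → ∃ u ∈ U, L₁.Diverges u) := by
  obtain ⟨σ, hσ⟩ := h
  have hreduce : (σ.reduceOption.map some).reduceOption = σ.reduceOption := by
    simp [List.reduceOption]
  have hU := hσ.fst_of_prod.eq_after_of_normFdr
  have hdiv := hσ.fst_of_prod.exists_diverges_of_normFdr
  rw [hreduce] at hU hdiv
  exact ⟨σ.reduceOption, hU, hσ.snd_of_prod.weak_reduceOption, hdiv⟩

end Product

end LTS

/-- if failures-divergences refinement holds then no FD-witness
is reachable in the product. -/
theorem failures_divergences_refinement_no_witness {S₁ S₂ Act : Type*}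
    (L₁ : LTS S₁ Act) (L₂ : LTS S₂ Act)
    (hfail : L₂.failuresBot ⊆ L₁.failuresBot)
    (hdiv : L₂.divergences ⊆ L₁.divergences) :
    ¬ ∃ p : Set S₁ × S₂, ((L₁.normFdr).prod L₂).Reachable p ∧ FDwitness L₁ L₂ p := by
  rintro ⟨⟨U, s⟩, hreach, hconv, hwit⟩
  obtain ⟨ρ, rfl, hs, hρ⟩ := hreach.exists_after_of_normFdr_prod
  have hρdiv : ρ ∉ L₁.divergences := mt hρ hconv
  have hsdiv : ¬ L₂.Diverges s := fun h => hρdiv (hdiv (LTS.mem_divergences_of_diverges hs h))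
  have hsub : L₂.refusalsSet (L₂.after ρ) ⊆ L₁.refusalsSet (L₁.after ρ) :=
    LTS.refusalsSet_after_subset_of_failuresBot_subset hfail hρdiv
  obtain hempty | ⟨hstable, href⟩ | hdiverges := hwit
  · obtain ⟨X, hX⟩ := LTS.refusalsSet_after_nonempty hs hsdiv
    obtain ⟨u, hu, -⟩ := hsub hX
    exact Set.eq_empty_iff_forall_notMem.1 hempty u hu
  · exact href fun X hX => hsub ⟨s, hs, hstable, hX⟩
  · exact hsdiv hdiverges
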